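/- arXiv:2302.00555 — 3 statements merged into one kernel-verified Lean document; each statement's English description precedes it below -/
import Mathlib

section
/- Let e be an admissible tableau supported on X(v_6) with S(2k) = B∪{4n−1,4n+2}, S(1) = A∪{4n−2,4n−1,4n,4n+1,4n+2}, and suppose e(k+1,2n) = 4n+1. Then S(k) = A∪{4n} and S(k+1) = B∪{4n−2,4n+1}; in particular rows 1, k, k+1, 2k form the pattern Y_3. -/
/-!
Since a row has `4n+2` entries and contains no pair `t`, `8n+5-t`, it contains exactly one element of
each such pair; hence a row is encoded by its small set, and (R5) says that every `t ≤ 4n+2`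
lies in exactly `k` of the `2k` small sets (`sum_occ`). Let `cnt i m` be the number of entries
`≤ m` in row `i`. By (R2) it is nonincreasing in `i` (`cnt_anti`), and by (R4) `cnt i (4n+2)` is even.

For `l ≤ 2n-2` the first and last rows both have `cnt (2l) = l`, so every row does
(`cnt_even`). Hence membership of the odd number `2l+1` is nonincreasing in `i`, and it
must hold exactly for `i ≤ k` (`occ_odd`); the even number `2l+2 ≤ 4n-4` takes the complementary
rows.

Only `4n-2, …, 4n+2` remain to be decided. From `e(k+1,2n) = 4n+1` and parity, rows `k+1,…,2k`
all have exactly `2n` small entries, of which `2n-1` are already `≤ 4n-1`; so `4n` is absent from these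
rows and present in rows `1,…,k`. A total count of small entries shows that row `k` has exactly `2n`
of them, which determines `S(k)`. In row `k+1` exactly one of `4n-2`, `4n-1` occurs; if it were `4n-1`,
then `4n-1` would occur in all rows `> k`, hence not in row `1`, a contradiction.
-/

/-- The "small set" `S(i) = { e(i,j) : 1 ≤ j ≤ 4n+2, e(i,j) ≤ 4n+2 }` of row `i`. -/
def smallSet (n : ℕ) (e : ℕ → ℕ → ℕ) (i : ℕ) : Finset ℕ :=
  ((Finset.Icc 1 (4*n+2)).filter (fun j => e i j ≤ 4*n+2)).image (e i)

/-- `A = {1,3,5,…,4n-3}`, the odd integers `≤ 4n-3`. -/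
def setA (n : ℕ) : Finset ℕ := (Finset.Icc 1 (4*n-3)).filter (fun t => ¬ 2 ∣ t)

/-- `B = {2,4,…,4n-4}`, the even integers `≤ 4n-4`. -/
def setB (n : ℕ) : Finset ℕ := (Finset.Icc 1 (4*n-4)).filter (fun t => 2 ∣ t)

/-- An admissible tableau: `e i j ∈ {1,…,8n+4}` for `1 ≤ i ≤ 2k`, `1 ≤ j ≤ 4n+2`,
subject to the conditions (R1)–(R5). -/
structure IsAdmissible (n k : ℕ) (e : ℕ → ℕ → ℕ) : Prop where
  mem_range : ∀ i j, 1 ≤ i → i ≤ 2*k → 1 ≤ j → j ≤ 4*n+2 → 1 ≤ e i j ∧ e i j ≤ 8*n+4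
  /-- (R1) rows strictly increase -/
  row_strict : ∀ i j, 1 ≤ i → i ≤ 2*k → 1 ≤ j → j < 4*n+2 → e i j < e i (j+1)
  /-- (R2) columns are nondecreasing -/
  col_mono : ∀ i j, 1 ≤ i → i < 2*k → 1 ≤ j → j ≤ 4*n+2 → e i j ≤ e (i+1) j
  /-- (R3) no row contains both `t` and `8n+5-t` -/
  no_pair : ∀ i j j', 1 ≤ i → i ≤ 2*k → 1 ≤ j → j ≤ 4*n+2 → 1 ≤ j' → j' ≤ 4*n+2 →
    e i j + e i j' ≠ 8*n+5
  /-- (R4) each row has an even number of entries `> 4n+2` -/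
  even_big : ∀ i, 1 ≤ i → i ≤ 2*k →
    Even (((Finset.Icc 1 (4*n+2)).filter (fun j => 4*n+2 < e i j)).card)
  /-- (R5) `t` and `8n+5-t` occur equally often in the tableau -/
  balanced : ∀ t, 1 ≤ t → t ≤ 8*n+4 →
    (((Finset.Icc 1 (2*k)) ×ˢ (Finset.Icc 1 (4*n+2))).filter
      (fun p => e p.1 p.2 = t)).card =
    (((Finset.Icc 1 (2*k)) ×ˢ (Finset.Icc 1 (4*n+2))).filter
      (fun p => e p.1 p.2 = 8*n+5-t)).card

/-- The first `4n+2` entries of the one-line notation of `v₆`. -/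
def bnd (n : ℕ) (j : ℕ) : ℕ :=
  if j ≤ 2*n-2 then 2*j
  else if j = 2*n-1 then 4*n-1
  else if j = 2*n then 4*n+2
  else if j = 2*n+1 then 4*n+4
  else if j = 2*n+2 then 4*n+5
  else if j = 2*n+3 then 4*n+7
  else 2*j

/-- The tableau is supported on the Schubert variety `X(v₆)`. -/
def SupportedOnXv6 (n k : ℕ) (e : ℕ → ℕ → ℕ) : Prop :=
  ∀ j, 1 ≤ j → j ≤ 4*n+2 → e (2*k) j ≤ bnd n j

/-! ### Occurrence and counting functions of a row -/

/-- The number of times `t` occurs in row `i` (it is `0` or `1` as rows are strictly increasing). -/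
def occ (n : ℕ) (e : ℕ → ℕ → ℕ) (i t : ℕ) : ℕ :=
  ((Finset.Icc 1 (4*n+2)).filter (fun j => e i j = t)).card

/-- The number of entries of row `i` that are at most `m`. -/
def cnt (n : ℕ) (e : ℕ → ℕ → ℕ) (i m : ℕ) : ℕ :=
  ((Finset.Icc 1 (4*n+2)).filter (fun j => e i j ≤ m)).card

lemma row_lt {n k : ℕ} {e : ℕ → ℕ → ℕ} (he : IsAdmissible n k e) {i : ℕ} (h1 : 1 ≤ i)
    (h2 : i ≤ 2*k) {j j' : ℕ} (hj : 1 ≤ j) (hjj : j < j') (hj' : j' ≤ 4*n+2) :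
    e i j < e i j' := by
  induction j', hjj using Nat.le_induction with
  | base => exact he.row_strict i j h1 h2 hj (by omega)
  | succ m hm ih =>
    have h := he.row_strict i m h1 h2 (by omega) (by omega)
    have := ih (by omega)
    omega

lemma row_inj {n k : ℕ} {e : ℕ → ℕ → ℕ} (he : IsAdmissible n k e) {i : ℕ} (h1 : 1 ≤ i)
    (h2 : i ≤ 2*k) {j j' : ℕ} (hj : 1 ≤ j) (hj2 : j ≤ 4*n+2) (hj' : 1 ≤ j') (hj2' : j' ≤ 4*n+2)
    (h : e i j = e i j') : j = j' := by
  rcases lt_trichotomy j j' with hlt | heq | hgt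
  · have := row_lt he h1 h2 hj hlt hj2'
    omega
  · exact heq
  · have := row_lt he h1 h2 hj' hgt hj2
    omega

lemma occ_le_one {n k : ℕ} {e : ℕ → ℕ → ℕ} (he : IsAdmissible n k e) {i : ℕ} (h1 : 1 ≤ i)
    (h2 : i ≤ 2*k) (t : ℕ) : occ n e i t ≤ 1 := by
  unfold occ
  rw [Finset.card_le_one]
  intro a ha b hb
  simp only [Finset.mem_filter, Finset.mem_Icc] at ha hb
  exact row_inj he h1 h2 ha.1.1 ha.1.2 hb.1.1 hb.1.2 (by omega)

lemma occ_pos_iff {n : ℕ} {e : ℕ → ℕ → ℕ} {i t : ℕ} :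
    0 < occ n e i t ↔ ∃ j, (1 ≤ j ∧ j ≤ 4*n+2) ∧ e i j = t := by
  unfold occ
  rw [Finset.card_pos]
  simp [Finset.Nonempty]

lemma mem_smallSet_iff {n : ℕ} {e : ℕ → ℕ → ℕ} {i t : ℕ} :
    t ∈ smallSet n e i ↔ t ≤ 4*n+2 ∧ 0 < occ n e i t := by
  rw [occ_pos_iff]
  unfold smallSet
  simp only [Finset.mem_image, Finset.mem_filter, Finset.mem_Icc]
  constructor
  · rintro ⟨j, ⟨hj, hle⟩, rfl⟩
    exact ⟨hle, j, hj, rfl⟩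
  · rintro ⟨hle, j, hj, rfl⟩
    exact ⟨j, ⟨hj, hle⟩, rfl⟩

lemma cnt_succ (n : ℕ) (e : ℕ → ℕ → ℕ) (i m : ℕ) :
    cnt n e i (m+1) = cnt n e i m + occ n e i (m+1) := by
  unfold cnt occ
  rw [← Finset.card_union_of_disjoint, ← Finset.filter_or]
  · congr 1
    apply Finset.filter_congr
    intro j _
    omega
  · rw [Finset.disjoint_filter]
    intro j _ h
    omega

lemma cnt_zero {n k : ℕ} {e : ℕ → ℕ → ℕ} (he : IsAdmissible n k e) {i : ℕ} (h1 : 1 ≤ i)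
    (h2 : i ≤ 2*k) : cnt n e i 0 = 0 := by
  unfold cnt
  rw [Finset.card_eq_zero, Finset.filter_eq_empty_iff]
  intro j hj
  rw [Finset.mem_Icc] at hj
  have := he.mem_range i j h1 h2 hj.1 hj.2
  omega

lemma cnt_anti {n k : ℕ} {e : ℕ → ℕ → ℕ} (he : IsAdmissible n k e) {i i' : ℕ} (h1 : 1 ≤ i)
    (h : i ≤ i') (h2 : i' ≤ 2*k) (m : ℕ) : cnt n e i' m ≤ cnt n e i m := by
  induction i', h using Nat.le_induction with
  | base => exact le_rfl
  | succ p hp ih =>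
    refine le_trans ?_ (ih (by omega))
    unfold cnt
    apply Finset.card_le_card
    intro j hj
    simp only [Finset.mem_filter, Finset.mem_Icc] at hj ⊢
    have := he.col_mono p j (by omega) (by omega) hj.1.1 hj.1.2
    exact ⟨hj.1, by omega⟩

lemma cnt_parity {n k : ℕ} {e : ℕ → ℕ → ℕ} (he : IsAdmissible n k e) {i : ℕ} (h1 : 1 ≤ i)
    (h2 : i ≤ 2*k) : Even (cnt n e i (4*n+2)) := by
  have hb := he.even_big i h1 h2
  have hs := Finset.card_filter_add_card_filter_not (s := Finset.Icc 1 (4*n+2))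
    (fun j => e i j ≤ 4*n+2)
  simp only [not_le, Nat.card_Icc] at hs
  unfold cnt
  rw [Nat.even_iff] at hb ⊢
  omega

/-! ### Consequences of the balance condition -/

/-- Each row contains exactly one element of each pair `t`, `8n+5-t`: the entries, folded onto
`{1,…,4n+2}`, form an injective and hence surjective map. -/
lemma occ_pair {n k : ℕ} {e : ℕ → ℕ → ℕ} (he : IsAdmissible n k e) {i : ℕ} (h1 : 1 ≤ i)
    (h2 : i ≤ 2*k) {t : ℕ} (ht : 1 ≤ t) (ht2 : t ≤ 4*n+2) :
    occ n e i t + occ n e i (8*n+5-t) = 1 := by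
  have hle : ¬ (0 < occ n e i t ∧ 0 < occ n e i (8*n+5-t)) := by
    rintro ⟨ha, hb⟩
    obtain ⟨j, hj, hjt⟩ := occ_pos_iff.1 ha
    obtain ⟨j', hj', hjt'⟩ := occ_pos_iff.1 hb
    exact he.no_pair i j j' h1 h2 hj.1 hj.2 hj'.1 hj'.2 (by omega)
  have hge : 0 < occ n e i t ∨ 0 < occ n e i (8*n+5-t) := by
    have hsurj := Finset.surj_on_of_inj_on_of_card_le (s := Finset.Icc 1 (4*n+2))
      (t := Finset.Icc 1 (4*n+2)) (fun j _ => min (e i j) (8*n+5 - e i j))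
      (by
        intro j hj
        rw [Finset.mem_Icc] at hj ⊢
        have := he.mem_range i j h1 h2 hj.1 hj.2
        omega)
      (by
        intro j j' hj hj' h
        rw [Finset.mem_Icc] at hj hj'
        have hr := he.mem_range i j h1 h2 hj.1 hj.2
        have hr' := he.mem_range i j' h1 h2 hj'.1 hj'.2
        have hp := he.no_pair i j j' h1 h2 hj.1 hj.2 hj'.1 hj'.2
        exact row_inj he h1 h2 hj.1 hj.2 hj'.1 hj'.2 (by omega))
      le_rfl t (Finset.mem_Icc.2 ⟨ht, ht2⟩)
    obtain ⟨j, hj, hjt⟩ := hsurj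
    rw [Finset.mem_Icc] at hj
    have hr := he.mem_range i j h1 h2 hj.1 hj.2
    by_cases hc : e i j = t
    · exact Or.inl (occ_pos_iff.2 ⟨j, hj, hc⟩)
    · exact Or.inr (occ_pos_iff.2 ⟨j, hj, by omega⟩)
  have ha := occ_le_one he h1 h2 t
  have hb := occ_le_one he h1 h2 (8*n+5-t)
  omega

/-- Every `t ≤ 4n+2` occurs in exactly `k` of the `2k` rows. -/
lemma sum_occ {n k : ℕ} {e : ℕ → ℕ → ℕ} (he : IsAdmissible n k e) {t : ℕ} (ht : 1 ≤ t)
    (ht2 : t ≤ 4*n+2) : ∑ i ∈ Finset.Icc 1 (2*k), occ n e i t = k := by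
  have key : ∀ s, (((Finset.Icc 1 (2*k)) ×ˢ (Finset.Icc 1 (4*n+2))).filter
      (fun p => e p.1 p.2 = s)).card = ∑ i ∈ Finset.Icc 1 (2*k), occ n e i s := by
    intro s
    simp only [occ, Finset.card_filter, Finset.sum_product]
  have hb := he.balanced t ht (by omega)
  rw [key, key] at hb
  have hsum : ∑ i ∈ Finset.Icc 1 (2*k), (occ n e i t + occ n e i (8*n+5-t)) =
      ∑ i ∈ Finset.Icc 1 (2*k), 1 := by
    apply Finset.sum_congr rfl
    intro i hi
    rw [Finset.mem_Icc] at hi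
    exact occ_pair he hi.1 hi.2 ht ht2
  rw [Finset.sum_add_distrib] at hsum
  simp only [Finset.sum_const, Nat.card_Icc, smul_eq_mul] at hsum
  omega

lemma sum_cnt {n k : ℕ} {e : ℕ → ℕ → ℕ} (he : IsAdmissible n k e) {m : ℕ}
    (hm : m ≤ 4*n+2) : ∑ i ∈ Finset.Icc 1 (2*k), cnt n e i m = m * k := by
  induction m with
  | zero =>
    rw [Nat.zero_mul]
    apply Finset.sum_eq_zero
    intro i hi
    rw [Finset.mem_Icc] at hi
    exact cnt_zero he hi.1 hi.2
  | succ m ih =>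
    simp only [cnt_succ, Finset.sum_add_distrib]
    rw [ih (by omega), sum_occ he (by omega) hm]
    ring

/-! ### Zero-one sequences of length `2k` with sum `k` -/

lemma sum_split (k : ℕ) (g : ℕ → ℕ) : ∑ i ∈ Finset.Icc 1 (2*k), g i =
    ∑ i ∈ Finset.Icc 1 k, g i + ∑ i ∈ Finset.Icc (k+1) (2*k), g i := by
  rw [← Finset.sum_union]
  · congr 1
    ext i
    simp only [Finset.mem_union, Finset.mem_Icc]
    omega
  · rw [Finset.disjoint_left]
    intro i
    simp only [Finset.mem_Icc]
    omega

lemma lower_eq_one {k : ℕ} {g : ℕ → ℕ} (hsum : ∑ i ∈ Finset.Icc 1 (2*k), g i = k)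
    (hle : ∀ i, 1 ≤ i → i ≤ 2*k → g i ≤ 1) (hup : ∀ i, k+1 ≤ i → i ≤ 2*k → g i = 0)
    {i : ℕ} (h1 : 1 ≤ i) (h2 : i ≤ k) : g i = 1 := by
  rw [sum_split, Finset.sum_eq_zero (s := Finset.Icc (k+1) (2*k))
    (fun i hi => hup i (Finset.mem_Icc.1 hi).1 (Finset.mem_Icc.1 hi).2), add_zero] at hsum
  by_contra hne
  have hlt : ∑ i ∈ Finset.Icc 1 k, g i < ∑ i ∈ Finset.Icc 1 k, 1 := by
    apply Finset.sum_lt_sum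
    · intro j hj
      rw [Finset.mem_Icc] at hj
      exact hle j hj.1 (by omega)
    · have := hle i h1 (by omega)
      exact ⟨i, Finset.mem_Icc.2 ⟨h1, h2⟩, by omega⟩
  simp at hlt
  omega

lemma lower_eq_zero {k : ℕ} {g : ℕ → ℕ} (hsum : ∑ i ∈ Finset.Icc 1 (2*k), g i = k)
    (hup : ∀ i, k+1 ≤ i → i ≤ 2*k → g i = 1)
    {i : ℕ} (h1 : 1 ≤ i) (h2 : i ≤ k) : g i = 0 := by
  rw [sum_split, Finset.sum_congr (s₁ := Finset.Icc (k+1) (2*k)) rfl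
    (fun i hi => hup i (Finset.mem_Icc.1 hi).1 (Finset.mem_Icc.1 hi).2)] at hsum
  simp only [Finset.sum_const, Nat.card_Icc, smul_eq_mul] at hsum
  have h0 : ∑ i ∈ Finset.Icc 1 k, g i = 0 := by omega
  exact Finset.sum_eq_zero_iff.1 h0 i (Finset.mem_Icc.2 ⟨h1, h2⟩)

/-- A nonincreasing `0`-`1` sequence of length `2k` with sum `k` consists of `k` ones followed by
`k` zeros. -/
lemma anti_zero_one {k : ℕ} {g : ℕ → ℕ} (hsum : ∑ i ∈ Finset.Icc 1 (2*k), g i = k)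
    (hle : ∀ i, 1 ≤ i → i ≤ 2*k → g i ≤ 1)
    (hanti : ∀ i i', 1 ≤ i → i ≤ i' → i' ≤ 2*k → g i' ≤ g i) :
    ∀ i, 1 ≤ i → i ≤ 2*k → g i = if i ≤ k then 1 else 0 := by
  have hup : ∀ i, k+1 ≤ i → i ≤ 2*k → g i = 0 := by
    intro i h1 h2
    by_contra hne
    have hge : ∑ j ∈ Finset.Icc 1 i, 1 ≤ ∑ j ∈ Finset.Icc 1 (2*k), g j := by
      refine le_trans (Finset.sum_le_sum (g := g) ?_) (Finset.sum_le_sum_of_subset ?_)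
      · intro j hj
        rw [Finset.mem_Icc] at hj
        have := hanti j i hj.1 hj.2 h2
        omega
      · exact Finset.Icc_subset_Icc_right h2
    simp only [Finset.sum_const, Nat.card_Icc, smul_eq_mul] at hge
    omega
  intro i h1 h2
  split_ifs with h
  · exact lower_eq_one hsum hle hup h1 h
  · exact hup i (by omega) h2

/-! ### Entries at most `4n-3` -/

lemma mem_setA {n t : ℕ} : t ∈ setA n ↔ (1 ≤ t ∧ t ≤ 4*n-3) ∧ t % 2 = 1 := by
  simp only [setA, Finset.mem_filter, Finset.mem_Icc]
  omega

lemma mem_setB {n t : ℕ} : t ∈ setB n ↔ (1 ≤ t ∧ t ≤ 4*n-4) ∧ t % 2 = 0 := by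
  simp only [setB, Finset.mem_filter, Finset.mem_Icc]
  omega

/-- The entry in column `j` is the `j`-th smallest of its row. -/
lemma cnt_entry {n k : ℕ} {e : ℕ → ℕ → ℕ} (he : IsAdmissible n k e) {i : ℕ} (h1 : 1 ≤ i)
    (h2 : i ≤ 2*k) {j : ℕ} (hj : 1 ≤ j) (hj2 : j ≤ 4*n+2) : cnt n e i (e i j) = j := by
  have : (Finset.Icc 1 (4*n+2)).filter (fun j' => e i j' ≤ e i j) = Finset.Icc 1 j := by
    ext j'
    simp only [Finset.mem_filter, Finset.mem_Icc]
    constructor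
    · rintro ⟨h, hle⟩
      refine ⟨h.1, ?_⟩
      by_contra hlt
      have := row_lt he h1 h2 hj (not_le.1 hlt) h.2
      omega
    · rintro ⟨ha, hb⟩
      refine ⟨⟨ha, by omega⟩, ?_⟩
      rcases hb.eq_or_lt with rfl | hlt
      · exact le_rfl
      · exact (row_lt he h1 h2 ha hlt hj2).le
  rw [cnt, this]
  simp

/-- If each pair `2l-1`, `2l` with `l ≤ L` meets row `i` in exactly one element, then `cnt i (2l) = l`. -/
lemma cnt_of_pairs {n k : ℕ} {e : ℕ → ℕ → ℕ} (he : IsAdmissible n k e) {i : ℕ} (h1 : 1 ≤ i)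
    (h2 : i ≤ 2*k) {L : ℕ} (h : ∀ l, l < L → occ n e i (2*l+1) + occ n e i (2*l+2) = 1)
    {l : ℕ} (hl : l ≤ L) : cnt n e i (2*l) = l := by
  induction l with
  | zero => exact cnt_zero he h1 h2
  | succ l ih =>
    have ha := cnt_succ n e i (2*l)
    have hb := cnt_succ n e i (2*l+1)
    have hc := h l (by omega)
    have hd := ih (by omega)
    rw [show 2*(l+1) = 2*l+1+1 by ring]
    rw [show 2*l+2 = 2*l+1+1 by ring] at hc
    omega

/-- The first and last rows both have `l` entries `≤ 2l`, so by monotonicity every row does. -/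
lemma cnt_even {n k : ℕ} (hn : 1 ≤ n) (hk : 1 ≤ k) {e : ℕ → ℕ → ℕ} (he : IsAdmissible n k e)
    (hlast : smallSet n e (2*k) = setB n ∪ {4*n-1, 4*n+2})
    (hfirst : smallSet n e 1 = setA n ∪ {4*n-2, 4*n-1, 4*n, 4*n+1, 4*n+2})
    {i : ℕ} (h1 : 1 ≤ i) (h2 : i ≤ 2*k) {l : ℕ} (hl : l ≤ 2*n-2) : cnt n e i (2*l) = l := by
  have hF : cnt n e 1 (2*l) = l := by
    refine cnt_of_pairs he le_rfl (by omega) (L := 2*n-2) ?_ hl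
    intro m hm
    have ha := occ_le_one he le_rfl (by omega) (2*m+1)
    have hb := @mem_smallSet_iff n e 1 (2*m+1)
    have hc := @mem_smallSet_iff n e 1 (2*m+2)
    rw [hfirst] at hb hc
    simp only [Finset.mem_union, mem_setA, Finset.mem_insert, Finset.mem_singleton] at hb hc
    omega
  have hL : cnt n e (2*k) (2*l) = l := by
    refine cnt_of_pairs he (by omega) le_rfl (L := 2*n-2) ?_ hl
    intro m hm
    have ha := occ_le_one he (i := 2*k) (by omega) le_rfl (2*m+2)
    have hb := @mem_smallSet_iff n e (2*k) (2*m+1)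
    have hc := @mem_smallSet_iff n e (2*k) (2*m+2)
    rw [hlast] at hb hc
    simp only [Finset.mem_union, mem_setB, Finset.mem_insert, Finset.mem_singleton] at hb hc
    omega
  have ha := cnt_anti he le_rfl h1 h2 (2*l)
  have hb := cnt_anti he h1 h2 le_rfl (2*l)
  omega

/-- An odd number `≤ 4n-3` occurs exactly in the rows `1,…,k`. -/
lemma occ_odd {n k : ℕ} (hn : 1 ≤ n) (hk : 1 ≤ k) {e : ℕ → ℕ → ℕ} (he : IsAdmissible n k e)
    (hlast : smallSet n e (2*k) = setB n ∪ {4*n-1, 4*n+2})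
    (hfirst : smallSet n e 1 = setA n ∪ {4*n-2, 4*n-1, 4*n, 4*n+1, 4*n+2})
    {i : ℕ} (h1 : 1 ≤ i) (h2 : i ≤ 2*k) {l : ℕ} (hl : l ≤ 2*n-2) :
    occ n e i (2*l+1) = if i ≤ k then 1 else 0 := by
  refine anti_zero_one (g := fun i => occ n e i (2*l+1)) (sum_occ he (by omega) (by omega))
    (fun i h1 h2 => occ_le_one he h1 h2 _) ?_ i h1 h2
  intro a b ha hab hb
  have hs := cnt_anti he ha hab hb (2*l+1)
  rw [cnt_succ, cnt_succ, cnt_even hn hk he hlast hfirst (by omega) hb hl,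
    cnt_even hn hk he hlast hfirst ha (by omega) hl] at hs
  simpa using hs

/-! ### The last six values -/

/-- in case (vi) with `S(1) = A ∪ {4n-2,4n-1,4n,4n+1,4n+2}` and
`e(k+1, 2n) = 4n+1`, rows `1, k, k+1, 2k` form the pattern `Y₃`. -/
theorem stmt_11 (n k : ℕ) (hn : 1 ≤ n) (hk : 1 ≤ k) (e : ℕ → ℕ → ℕ)
    (he : IsAdmissible n k e) (hsupp : SupportedOnXv6 n k e)
    (hlast : smallSet n e (2*k) = setB n ∪ {4*n-1, 4*n+2})
    (hfirst : smallSet n e 1 = setA n ∪ {4*n-2, 4*n-1, 4*n, 4*n+1, 4*n+2})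
    (hmid : e (k+1) (2*n) = 4*n+1) :
    smallSet n e k = setA n ∪ {4*n} ∧
    smallSet n e (k+1) = setB n ∪ {4*n-2, 4*n+1} := by
  -- shift `n` to avoid truncated subtraction: the values `4n-3, …, 4n+2` become
  -- `4p+1, …, 4p+6`
  obtain ⟨p, rfl⟩ : ∃ p, n = p+1 := ⟨n-1, by omega⟩
  set n := p+1 with hnp
  have hle := fun i h1 h2 t => occ_le_one he (i := i) h1 h2 t
  have hbase : ∀ i, 1 ≤ i → i ≤ 2*k → cnt n e i (4*p) = 2*p := by
    intro i h1 h2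
    have := cnt_even hn hk he hlast hfirst h1 h2 (l := 2*p) (by omega)
    rwa [show 2*(2*p) = 4*p by ring] at this
  have hodd : ∀ i, 1 ≤ i → i ≤ 2*k → occ n e i (4*p+1) = if i ≤ k then 1 else 0 := by
    intro i h1 h2
    have := occ_odd hn hk he hlast hfirst h1 h2 (l := 2*p) (by omega)
    rwa [show 2*(2*p) = 4*p by ring] at this
  have s1 := fun i => cnt_succ n e i (4*p)
  have s2 := fun i => cnt_succ n e i (4*p+1)
  have s3 := fun i => cnt_succ n e i (4*p+2)
  have s4 := fun i => cnt_succ n e i (4*p+3)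
  have s5 := fun i => cnt_succ n e i (4*p+4)
  have s6 := fun i => cnt_succ n e i (4*p+5)
  simp only [Nat.add_assoc, Nat.reduceAdd] at s1 s2 s3 s4 s5 s6
  have hN : 4*n+2 = 4*p+6 := by omega
  -- the last row
  have hL : ∀ t, 4*p < t → t ≤ 4*p+6 →
      (0 < occ n e (2*k) t ↔ t = 4*p+3 ∨ t = 4*p+6) := by
    intro t ht ht2
    have hb := @mem_smallSet_iff n e (2*k) t
    rw [hlast] at hb
    simp only [Finset.mem_union, mem_setB, Finset.mem_insert, Finset.mem_singleton] at hb
    omega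
  have hLc : cnt n e (2*k) (4*p+3) = 2*p+1 ∧ cnt n e (2*k) (4*p+4) = 2*p+1 ∧
      cnt n e (2*k) (4*p+6) = 2*p+2 := by
    have b := hbase (2*k) (by omega) le_rfl
    have l1 := hL (4*p+1) (by omega) (by omega)
    have l2 := hL (4*p+2) (by omega) (by omega)
    have l3 := hL (4*p+3) (by omega) (by omega)
    have l4 := hL (4*p+4) (by omega) (by omega)
    have l5 := hL (4*p+5) (by omega) (by omega)
    have l6 := hL (4*p+6) (by omega) (by omega)
    have m3 := hle (2*k) (by omega) le_rfl (4*p+3)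
    have m6 := hle (2*k) (by omega) le_rfl (4*p+6)
    have := s1 (2*k); have := s2 (2*k); have := s3 (2*k)
    have := s4 (2*k); have := s5 (2*k); have := s6 (2*k)
    omega
  -- the first row
  have hF : ∀ t, 4*p < t → t ≤ 4*p+6 → occ n e 1 t = 1 := by
    intro t ht ht2
    have hb := @mem_smallSet_iff n e 1 t
    have := hle 1 le_rfl (by omega) t
    rw [hfirst] at hb
    simp only [Finset.mem_union, mem_setA, Finset.mem_insert, Finset.mem_singleton] at hb
    omega
  have hFc : cnt n e 1 (4*p+6) = 2*p+6 := by
    have b := hbase 1 le_rfl (by omega)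
    have := hF (4*p+1) (by omega) (by omega)
    have := hF (4*p+2) (by omega) (by omega)
    have := hF (4*p+3) (by omega) (by omega)
    have := hF (4*p+4) (by omega) (by omega)
    have := hF (4*p+5) (by omega) (by omega)
    have := hF (4*p+6) (by omega) (by omega)
    have := s1 1; have := s2 1; have := s3 1; have := s4 1; have := s5 1; have := s6 1
    omega
  -- row `k+1`: column `2n` holds `4n+1`, and parity excludes the entry `4n+2`
  have hk5 : cnt n e (k+1) (4*p+5) = 2*p+2 := by
    have := cnt_entry he (i := k+1) (by omega) (by omega) (j := 2*n) (by omega) (by omega)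
    rw [hmid, show 4*n+1 = 4*p+5 by omega] at this
    omega
  have ho5 : occ n e (k+1) (4*p+5) = 1 := by
    have h := (occ_pos_iff (n := n) (e := e) (i := k+1) (t := 4*p+5)).2
      ⟨2*n, ⟨by omega, by omega⟩, by omega⟩
    have := hle (k+1) (by omega) (by omega) (4*p+5)
    omega
  have hk6 : cnt n e (k+1) (4*p+6) = 2*p+2 := by
    have hpar := cnt_parity he (i := k+1) (by omega) (by omega)
    rw [hN, Nat.even_iff] at hpar
    have := hle (k+1) (by omega) (by omega) (4*p+6)
    have := s6 (k+1)
    omega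
  -- `4n` is absent from rows `> k`, hence present in rows `≤ k`
  have h4 : ∀ i, k+1 ≤ i → i ≤ 2*k → occ n e i (4*p+4) = 0 := by
    intro i h1 h2
    have ha := cnt_anti he (by omega) h1 h2 (4*p+4)
    have hb := cnt_anti he (by omega) h2 le_rfl (4*p+3)
    have := s4 i; have := s5 (k+1)
    omega
  have h4k : occ n e k (4*p+4) = 1 :=
    lower_eq_one (g := fun i => occ n e i (4*p+4)) (sum_occ he (by omega) (by omega))
      (fun i h1 h2 => hle i h1 h2 _) h4 hk le_rfl
  -- row `k` has exactly `2n` small entries, by counting all of them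
  have hkN : cnt n e k (4*p+6) = 2*p+2 := by
    have hge := cnt_anti he hk (show k ≤ k+1 by omega) (by omega) (4*p+6)
    have hpar := cnt_parity he hk (by omega)
    rw [hN, Nat.even_iff] at hpar
    by_contra hne
    have hsum := sum_cnt he (m := 4*p+6) (by omega)
    rw [sum_split] at hsum
    have hupper : ∑ i ∈ Finset.Icc (k+1) (2*k), (2*p+2) ≤
        ∑ i ∈ Finset.Icc (k+1) (2*k), cnt n e i (4*p+6) := by
      apply Finset.sum_le_sum
      intro i hi
      rw [Finset.mem_Icc] at hi
      have := cnt_anti he (by omega) hi.2 le_rfl (4*p+6)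
      omega
    have hlower : ∑ i ∈ Finset.Icc 1 k, (2*p+4) < ∑ i ∈ Finset.Icc 1 k, cnt n e i (4*p+6) := by
      apply Finset.sum_lt_sum
      · intro i hi
        rw [Finset.mem_Icc] at hi
        have := cnt_anti he hi.1 hi.2 (by omega) (4*p+6)
        omega
      · exact ⟨1, Finset.mem_Icc.2 ⟨le_rfl, hk⟩, by omega⟩
    simp only [Finset.sum_const, Nat.card_Icc, smul_eq_mul] at hupper hlower
    rw [show 2*k+1-(k+1) = k by omega] at hupper
    rw [show k+1-1 = k by omega] at hlower
    nlinarith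
  -- `4n-1` is not in row `k+1`: otherwise it would lie in all rows `> k` and in no row `≤ k`
  have h3 : occ n e (k+1) (4*p+3) = 0 := by
    by_contra hne
    have hup : ∀ i, k+1 ≤ i → i ≤ 2*k → occ n e i (4*p+3) = 1 := by
      intro i h1 h2
      have ha := cnt_anti he (by omega) h1 h2 (4*p+2)
      have hb := cnt_anti he (by omega) h2 le_rfl (4*p+3)
      have := hle i (by omega) h2 (4*p+3)
      have := s3 i; have := s3 (k+1); have := s4 (k+1); have := s5 (k+1)
      omega
    have h0 := lower_eq_zero (g := fun i => occ n e i (4*p+3))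
      (sum_occ he (by omega) (by omega)) hup le_rfl hk
    have := hF (4*p+3) (by omega) (by omega)
    omega
  -- membership of the numbers `≤ 4n-4`
  have hsmall : ∀ i, 1 ≤ i → i ≤ 2*k → ∀ t, 1 ≤ t → t ≤ 4*p →
      occ n e i t = if i ≤ k then t % 2 else 1 - t % 2 := by
    intro i h1 h2 t ht ht2
    obtain ⟨l, hl | hl⟩ : ∃ l, t = 2*l+1 ∨ t = 2*l+2 := ⟨(t-1)/2, by omega⟩
    · have := occ_odd hn hk he hlast hfirst h1 h2 (l := l) (by omega)
      rw [hl, this]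
      split_ifs <;> omega
    · have ho := occ_odd hn hk he hlast hfirst h1 h2 (l := l) (by omega)
      have ha := cnt_even hn hk he hlast hfirst h1 h2 (l := l) (by omega)
      have hb := cnt_even hn hk he hlast hfirst h1 h2 (l := l+1) (by omega)
      have hc := cnt_succ n e i (2*l)
      have hd := cnt_succ n e i (2*l+1)
      rw [show 2*(l+1) = 2*l+1+1 by ring] at hb
      rw [hl, show 2*l+2 = 2*l+1+1 by ring]
      split_ifs at ho ⊢ <;> omega
  have hzero : ∀ i, 1 ≤ i → i ≤ 2*k → occ n e i 0 = 0 := by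
    intro i h1 h2
    by_contra hne
    obtain ⟨j, hj, hj0⟩ := occ_pos_iff.1 (Nat.pos_of_ne_zero hne)
    have := he.mem_range i j h1 h2 hj.1 hj.2
    omega
  constructor
  · have hb := hbase k hk (by omega)
    have ho := hodd k hk (by omega)
    rw [if_pos le_rfl] at ho
    have := s1 k; have := s2 k; have := s3 k; have := s4 k; have := s5 k; have := s6 k
    ext t
    rw [mem_smallSet_iff]
    simp only [Finset.mem_union, mem_setA, Finset.mem_singleton]
    have hz := hzero k hk (by omega)
    have hs := hsmall k hk (by omega) t
    rw [if_pos le_rfl] at hs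
    by_cases ht : 1 ≤ t ∧ t ≤ 4*p
    · have := hs ht.1 ht.2
      omega
    · by_cases ht2 : t ≤ 4*p+6
      · obtain h | h | h | h | h | h | h : t = 0 ∨ t = 4*p+1 ∨ t = 4*p+2 ∨ t = 4*p+3 ∨
          t = 4*p+4 ∨ t = 4*p+5 ∨ t = 4*p+6 := by omega
        all_goals rw [h]; omega
      · omega
  · have hb := hbase (k+1) (by omega) (by omega)
    have ho := hodd (k+1) (by omega) (by omega)
    rw [if_neg (by omega)] at ho
    have := s1 (k+1); have := s2 (k+1); have := s3 (k+1)
    have := s4 (k+1); have := s5 (k+1); have := s6 (k+1)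
    have h4' := h4 (k+1) le_rfl (by omega)
    ext t
    rw [mem_smallSet_iff]
    simp only [Finset.mem_union, mem_setB, Finset.mem_insert, Finset.mem_singleton]
    have hz := hzero (k+1) (by omega) (by omega)
    have hs := hsmall (k+1) (by omega) (by omega) t
    rw [if_neg (by omega)] at hs
    by_cases ht : 1 ≤ t ∧ t ≤ 4*p
    · have := hs ht.1 ht.2
      omega
    · by_cases ht2 : t ≤ 4*p+6
      · obtain h | h | h | h | h | h | h : t = 0 ∨ t = 4*p+1 ∨ t = 4*p+2 ∨ t = 4*p+3 ∨
          t = 4*p+4 ∨ t = 4*p+5 ∨ t = 4*p+6 := by omega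
        all_goals rw [h]; omega
      · omega
end

section
/- Let e be an admissible tableau such that for every row i the small set S(i) has cardinality 2n or 2n+2. Then the number of rows i with |S(i)| = 2n+2 is exactly k (and hence the number of rows with |S(i)| = 2n is also exactly k). -/
/-- The positions `(i, j)` of the tableau whose entry is at most `4n+2`. -/
def smallCells (n k : ℕ) (e : ℕ → ℕ → ℕ) : Finset (ℕ × ℕ) :=
  (Finset.Icc 1 (2*k) ×ˢ Finset.Icc 1 (4*n+2)).filter (fun p => e p.1 p.2 ≤ 4*n+2)

lemma row_injOn {n k : ℕ} {e : ℕ → ℕ → ℕ} (he : IsAdmissible n k e) {i : ℕ}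
    (hi : 1 ≤ i) (hik : i ≤ 2*k) : Set.InjOn (e i) (Set.Icc 1 (4*n+2)) := by
  apply StrictMonoOn.injOn
  apply strictMonoOn_of_lt_add_one Set.ordConnected_Icc
  intro j _ hj hj'
  simp only [Set.mem_Icc] at hj hj'
  exact he.row_strict i j hi hik hj.1 (by omega)

lemma card_smallCells_eq_sum {n k : ℕ} {e : ℕ → ℕ → ℕ} (he : IsAdmissible n k e) :
    (smallCells n k e).card = ∑ i ∈ Finset.Icc 1 (2*k), (smallSet n e i).card := by
  rw [smallCells, Finset.card_filter, Finset.sum_product]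
  refine Finset.sum_congr rfl fun i hi => ?_
  rw [Finset.mem_Icc] at hi
  rw [smallSet, Finset.card_image_of_injOn, Finset.card_filter]
  refine (row_injOn he hi.1 hi.2).mono fun j hj => ?_
  simp only [Finset.coe_filter, Finset.mem_Icc, Set.mem_ofPred_eq] at hj
  exact hj.1

lemma card_smallCells {n k : ℕ} {e : ℕ → ℕ → ℕ} (he : IsAdmissible n k e) :
    (smallCells n k e).card = k * (4*n+2) := by
  set C := Finset.Icc 1 (2*k) ×ˢ Finset.Icc 1 (4*n+2) with hC
  have hrange : ∀ p ∈ C, 1 ≤ e p.1 p.2 ∧ e p.1 p.2 ≤ 8*n+4 := by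
    intro p hp
    simp only [hC, Finset.mem_product, Finset.mem_Icc] at hp
    exact he.mem_range _ _ hp.1.1 hp.1.2 hp.2.1 hp.2.2
  have hsmall : (smallCells n k e).card =
      ∑ t ∈ Finset.Icc 1 (4*n+2), (C.filter (fun p => e p.1 p.2 = t)).card := by
    rw [Finset.card_eq_sum_card_fiberwise (f := fun p => e p.1 p.2) (t := Finset.Icc 1 (4*n+2))]
    · refine Finset.sum_congr rfl fun t ht => ?_
      rw [Finset.mem_Icc] at ht
      rw [smallCells, Finset.filter_filter]
      congr 1
      exact Finset.filter_congr fun p _ => by omega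
    · intro p hp
      have hp' := Finset.mem_filter.1 hp
      have := hrange p hp'.1
      simp only [Finset.coe_Icc, Set.mem_Icc]
      omega
  have hbig : (C.filter (fun p => ¬ e p.1 p.2 ≤ 4*n+2)).card =
      ∑ t ∈ Finset.Icc 1 (4*n+2), (C.filter (fun p => e p.1 p.2 = 8*n+5-t)).card := by
    rw [Finset.card_eq_sum_card_fiberwise (f := fun p => 8*n+5 - e p.1 p.2)
      (t := Finset.Icc 1 (4*n+2))]
    · refine Finset.sum_congr rfl fun t ht => ?_
      rw [Finset.mem_Icc] at ht
      rw [Finset.filter_filter]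
      congr 1
      refine Finset.filter_congr fun p hp => ?_
      have := hrange p hp
      omega
    · intro p hp
      have hp' := Finset.mem_filter.1 hp
      have := hrange p hp'.1
      simp only [Finset.coe_Icc, Set.mem_Icc]
      omega
  have heq : (smallCells n k e).card = (C.filter (fun p => ¬ e p.1 p.2 ≤ 4*n+2)).card := by
    rw [hsmall, hbig]
    refine Finset.sum_congr rfl fun t ht => ?_
    rw [Finset.mem_Icc] at ht
    exact he.balanced t ht.1 (by omega)
  have htot := Finset.card_filter_add_card_filter_not (s := C) (fun p => e p.1 p.2 ≤ 4*n+2)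
  have hCcard : C.card = 2 * (k * (4*n+2)) := by
    rw [hC, Finset.card_product, Nat.card_Icc, Nat.card_Icc]
    simp only [Nat.add_sub_cancel]
    ring
  rw [← heq, hCcard] at htot
  change (smallCells n k e).card + _ = _ at htot
  omega

/-- if every small set has cardinality `2n` or `2n+2`, then
exactly `k` rows have small set of cardinality `2n+2` (and exactly `k` rows
have small set of cardinality `2n`). -/
theorem stmt_13 (n k : ℕ) (hn : 1 ≤ n) (hk : 1 ≤ k) (e : ℕ → ℕ → ℕ)
    (he : IsAdmissible n k e)
    (hcard : ∀ i, 1 ≤ i → i ≤ 2*k →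
      (smallSet n e i).card = 2*n ∨ (smallSet n e i).card = 2*n+2) :
    ((Finset.Icc 1 (2*k)).filter (fun i => (smallSet n e i).card = 2*n+2)).card = k ∧
    ((Finset.Icc 1 (2*k)).filter (fun i => (smallSet n e i).card = 2*n)).card = k := by
  have hsum := card_smallCells_eq_sum he
  rw [card_smallCells he] at hsum
  have hrow : ∑ i ∈ Finset.Icc 1 (2*k), (smallSet n e i).card =
      ∑ i ∈ Finset.Icc 1 (2*k), (2*n + 2 * if (smallSet n e i).card = 2*n+2 then 1 else 0) := by
    refine Finset.sum_congr rfl fun i hi => ?_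
    rw [Finset.mem_Icc] at hi
    rcases hcard i hi.1 hi.2 with h | h <;> simp [h]
  rw [hrow, Finset.sum_add_distrib, Finset.sum_const, ← Finset.mul_sum, ← Finset.card_filter,
    Nat.card_Icc, Nat.add_sub_cancel, smul_eq_mul] at hsum
  have ha : ((Finset.Icc 1 (2*k)).filter (fun i => (smallSet n e i).card = 2*n+2)).card = k := by
    linarith
  refine ⟨ha, ?_⟩
  have htot := Finset.card_filter_add_card_filter_not (s := Finset.Icc 1 (2*k))
    (fun i => (smallSet n e i).card = 2*n+2)
  have hcompl : (Finset.Icc 1 (2*k)).filter (fun i => ¬ (smallSet n e i).card = 2*n+2) =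
      (Finset.Icc 1 (2*k)).filter (fun i => (smallSet n e i).card = 2*n) := by
    refine Finset.filter_congr fun i hi => ?_
    rw [Finset.mem_Icc] at hi
    have := hcard i hi.1 hi.2
    omega
  rw [hcompl, ha, Nat.card_Icc] at htot
  omega
end

section
/- Let I be the ideal of the polynomial ring ℂ[z_1,…,z_10] generated by the twenty polynomials z_1z_2 − z_5², z_1z_3 − z_6², z_1z_4 − z_7², z_1z_8 − z_5z_6, z_1z_9 − z_5z_7, z_1z_10 − z_6z_7, z_2z_3 − z_8², z_2z_4 − z_9², z_2z_6 − z_5z_8, z_2z_7 − z_5z_9, z_2z_10 − z_8z_9, z_3z_4 − z_10², z_3z_5 − z_6z_8, z_3z_7 − z_6z_10, z_3z_9 − z_8z_10, z_4z_5 − z_7z_9, z_4z_6 − z_7z_10, z_4z_8 − z_9z_10, z_5z_10 − z_6z_9, z_6z_9 − z_7z_8. Then the Krull dimension of the quotient ring ℂ[z_1,…,z_10]/I equals 4. -/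
open MvPolynomial

/-!
The quotient `A / I` is sandwiched between two polynomial rings in four variables,
`ℂ[x₀, …, x₃] → A / I → ℂ[t₀, …, t₃]`, where the first map sends `xᵢ` to the class of the diagonal
coordinate `z_{i+1}`, and the second is the Veronese parametrisation, sending the coordinates to
the ten monomials `tᵢ tⱼ`. Both maps are integral, because the square of every generator of the
target lies in the image: each off-diagonal coordinate satisfies a relation
`z_{ij}² = z_{ii} z_{jj}`, and `tᵢ²` is the image of a diagonal coordinate.

By incomparability, an integral ring map induces a strictly monotone map on prime spectra, so the
Krull dimension does not increase from source to target (injectivity plays no role). Hence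
`4 = dim ℂ[t] ≤ dim A / I ≤ dim ℂ[x] = 4`.
-/

/-- Krull dimension does not increase along an integral ring map, by incomparability of primes. -/
lemma ringKrullDim_le_of_isIntegral {R S : Type*} [CommRing R] [CommRing S] (f : R →+* S)
    (hf : f.IsIntegral) : ringKrullDim S ≤ ringKrullDim R := by
  algebraize [f]
  refine Order.krullDim_le_of_strictMono (PrimeSpectrum.comap (algebraMap R S)) fun p q hpq ↦ ?_
  exact Ideal.IsIntegral.comap_lt_comap (R := R) (I := p.asIdeal) (J := q.asIdeal) hpq

/-- A map of `ℂ`-algebras is integral as soon as its image contains the squares of a family of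
algebra generators of the target, the family being given as the images of the variables under a
surjection from a polynomial ring. -/
lemma isIntegral_of_sq_mem_range {R S σ : Type*} [CommRing R] [CommRing S] [Algebra ℂ R]
    [Algebra ℂ S] (f : R →ₐ[ℂ] S) (g : MvPolynomial σ ℂ →ₐ[ℂ] S) (hg : Function.Surjective g)
    (h : ∀ i, ∃ r, f r = g (X i) ^ 2) : f.toRingHom.IsIntegral := by
  intro s
  obtain ⟨p, rfl⟩ := hg s
  algebraize [f.toRingHom]
  change IsIntegral R (g p)
  induction p using MvPolynomial.induction_on with
  | C a =>
    have : g (C a) = algebraMap R S (algebraMap ℂ R a) :=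
      (g.commutes a).trans (f.commutes a).symm
    rw [this]
    exact isIntegral_algebraMap
  | add p q hp hq => rw [map_add]; exact hp.add hq
  | mul_X p i hp =>
    rw [map_mul]
    refine hp.mul (IsIntegral.of_pow two_pos ?_)
    obtain ⟨r, hr⟩ := h i
    rw [← hr]
    exact isIntegral_algebraMap (x := r)

/-- The parametrisation of the second Veronese threefold: the coordinates are sent to the quadratic
monomials `tᵢ tⱼ`, the squares coming first and the mixed monomials following in lexicographic
order. -/
noncomputable def veroneseMap : MvPolynomial (Fin 10) ℂ →ₐ[ℂ] MvPolynomial (Fin 4) ℂ :=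
  aeval ![X 0 ^ 2, X 1 ^ 2, X 2 ^ 2, X 3 ^ 2, X 0 * X 1, X 0 * X 2, X 0 * X 3, X 1 * X 2,
    X 1 * X 3, X 2 * X 3]

/-- An ideal vanishing on the Veronese threefold and containing the six relations
`z_{ij}² = z_{ii} z_{jj}` has a quotient of dimension four. -/
lemma ringKrullDim_quotient_eq_four (I : Ideal (MvPolynomial (Fin 10) ℂ))
    (hI : ∀ p ∈ I, veroneseMap p = 0)
    (h4 : X 0 * X 1 - X 4 ^ 2 ∈ I) (h5 : X 0 * X 2 - X 5 ^ 2 ∈ I) (h6 : X 0 * X 3 - X 6 ^ 2 ∈ I)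
    (h7 : X 1 * X 2 - X 7 ^ 2 ∈ I) (h8 : X 1 * X 3 - X 8 ^ 2 ∈ I)
    (h9 : X 2 * X 3 - X 9 ^ 2 ∈ I) :
    ringKrullDim (MvPolynomial (Fin 10) ℂ ⧸ I) = 4 := by
  have hdim : ringKrullDim (MvPolynomial (Fin 4) ℂ) = 4 := by simp
  apply le_antisymm
  · rw [← hdim]
    let f : MvPolynomial (Fin 4) ℂ →ₐ[ℂ] MvPolynomial (Fin 10) ℂ ⧸ I :=
      (Ideal.Quotient.mkₐ ℂ I).comp (aeval ![X 0, X 1, X 2, X 3])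
    refine ringKrullDim_le_of_isIntegral f.toRingHom (isIntegral_of_sq_mem_range f
      (Ideal.Quotient.mkₐ ℂ I) (Ideal.Quotient.mkₐ_surjective ℂ I) fun i ↦ ?_)
    have key (p : MvPolynomial (Fin 4) ℂ)
        (hp : aeval ![X 0, X 1, X 2, X 3] p - (X i : MvPolynomial (Fin 10) ℂ) ^ 2 ∈ I) :
        ∃ r, f r = Ideal.Quotient.mkₐ ℂ I (X i) ^ 2 :=
      ⟨p, (Ideal.Quotient.eq.mpr hp).trans (map_pow _ _ _)⟩
    fin_cases i
    · exact key (X 0 ^ 2) (by simp)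
    · exact key (X 1 ^ 2) (by simp)
    · exact key (X 2 ^ 2) (by simp)
    · exact key (X 3 ^ 2) (by simp)
    · exact key (X 0 * X 1) (by simpa using h4)
    · exact key (X 0 * X 2) (by simpa using h5)
    · exact key (X 0 * X 3) (by simpa using h6)
    · exact key (X 1 * X 2) (by simpa using h7)
    · exact key (X 1 * X 3) (by simpa using h8)
    · exact key (X 2 * X 3) (by simpa using h9)
  · rw [← hdim]
    let f : MvPolynomial (Fin 10) ℂ ⧸ I →ₐ[ℂ] MvPolynomial (Fin 4) ℂ :=
      Ideal.Quotient.liftₐ I veroneseMap hI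
    refine ringKrullDim_le_of_isIntegral f.toRingHom (isIntegral_of_sq_mem_range f
      (AlgHom.id ℂ _) Function.surjective_id fun i ↦
        ⟨Ideal.Quotient.mk I (X (Fin.castLE (by norm_num) i)), ?_⟩)
    change veroneseMap _ = X i ^ 2
    fin_cases i <;> simp [veroneseMap]

/-- the quotient of `ℂ[z₁,…,z₁₀]` (here `zᵢ = X (i-1)`) by the
ideal generated by the twenty quadratic relations has Krull dimension `4`. -/
theorem stmt_18 :
    ringKrullDim (MvPolynomial (Fin 10) ℂ ⧸
      (Ideal.span ({
        X 0 * X 1 - (X 4)^2,    -- z₁z₂ - z₅²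
        X 0 * X 2 - (X 5)^2,    -- z₁z₃ - z₆²
        X 0 * X 3 - (X 6)^2,    -- z₁z₄ - z₇²
        X 0 * X 7 - X 4 * X 5,  -- z₁z₈ - z₅z₆
        X 0 * X 8 - X 4 * X 6,  -- z₁z₉ - z₅z₇
        X 0 * X 9 - X 5 * X 6,  -- z₁z₁₀ - z₆z₇
        X 1 * X 2 - (X 7)^2,    -- z₂z₃ - z₈²
        X 1 * X 3 - (X 8)^2,    -- z₂z₄ - z₉²
        X 1 * X 5 - X 4 * X 7,  -- z₂z₆ - z₅z₈
        X 1 * X 6 - X 4 * X 8,  -- z₂z₇ - z₅z₉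
        X 1 * X 9 - X 7 * X 8,  -- z₂z₁₀ - z₈z₉
        X 2 * X 3 - (X 9)^2,    -- z₃z₄ - z₁₀²
        X 2 * X 4 - X 5 * X 7,  -- z₃z₅ - z₆z₈
        X 2 * X 6 - X 5 * X 9,  -- z₃z₇ - z₆z₁₀
        X 2 * X 8 - X 7 * X 9,  -- z₃z₉ - z₈z₁₀
        X 3 * X 4 - X 6 * X 8,  -- z₄z₅ - z₇z₉
        X 3 * X 5 - X 6 * X 9,  -- z₄z₆ - z₇z₁₀
        X 3 * X 7 - X 8 * X 9,  -- z₄z₈ - z₉z₁₀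
        X 4 * X 9 - X 5 * X 8,  -- z₅z₁₀ - z₆z₉
        X 5 * X 8 - X 6 * X 7   -- z₆z₉ - z₇z₈
        } : Set (MvPolynomial (Fin 10) ℂ)))) = 4 := by
  refine ringKrullDim_quotient_eq_four _ (fun p hp ↦ ?_) ?_ ?_ ?_ ?_ ?_ ?_
  · rw [← RingHom.mem_ker]
    refine Ideal.span_le.mpr ?_ hp
    simp only [Set.insert_subset_iff, Set.singleton_subset_iff, SetLike.mem_coe, RingHom.mem_ker]
    refine ⟨?_, ?_, ?_, ?_, ?_, ?_, ?_, ?_, ?_, ?_, ?_, ?_, ?_, ?_, ?_, ?_, ?_, ?_, ?_, ?_⟩ <;>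
      simp [veroneseMap] <;> ring
  -- The six relations stand at positions `0, 1, 2, 6, 7, 11` (from `0`) in the list of generators.
  · apply Ideal.subset_span
    exact Set.mem_insert _ _
  · apply Ideal.subset_span
    iterate 1 apply Set.mem_insert_of_mem
    exact Set.mem_insert _ _
  · apply Ideal.subset_span
    iterate 2 apply Set.mem_insert_of_mem
    exact Set.mem_insert _ _
  · apply Ideal.subset_span
    iterate 6 apply Set.mem_insert_of_mem
    exact Set.mem_insert _ _
  · apply Ideal.subset_span
    iterate 7 apply Set.mem_insert_of_mem
    exact Set.mem_insert _ _
  · apply Ideal.subset_span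
    iterate 11 apply Set.mem_insert_of_mem
    exact Set.mem_insert _ _
end
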